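/- Let X be a complex Banach space and let T be a bounded ℂ-linear operator on X that is invertible and doubly power-bounded, i.e. sup_{n∈ℤ} ‖Tⁿ‖ < ∞. If the spectrum of T equals {1}, then T is the identity operator. -/

import Mathlib

/-!
If `‖uⁿ‖ ≤ C` for all integers `n`, then `u` acts isometrically for the equivalent seminorm
`sup_n ‖uⁿ x‖`, so the inverse of `α - β u` is `O(1 / |‖α‖ - ‖β‖|)`. When `1` is the only spectral
value, the Cayley substitution `α = z + 1`, `β = z - 1` moves it to infinity and the unit circle to
the imaginary axis: `G z = ((z + 1) - (z - 1) u)⁻¹` is entire and `|re z| ‖G z‖ = O(1 + ‖z‖)`.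
Such a function is bounded, by the maximum principle applied to `(1 + z² / r²) G z` on the disc of
radius `r`, and is therefore constant. Comparing `G 1 = 1 / 2` with `G (-1) = (2 u)⁻¹` gives
`u = 1`.
-/

open Filter Topology

section Liouville

theorem norm_one_add_sq_div_norm_sq {z : ℂ} (hz : z ≠ 0) :
    ‖1 + z ^ 2 / (‖z‖ : ℂ) ^ 2‖ = 2 * |z.re| / ‖z‖ := by
  have hnorm : (‖z‖ : ℂ) ≠ 0 := by simpa using hz
  have hfactor : 1 + z ^ 2 / (‖z‖ : ℂ) ^ 2 = z * (2 * z.re : ℝ) / (‖z‖ : ℂ) ^ 2 := by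
    rw [← Complex.add_conj, mul_add, Complex.mul_conj']
    field_simp
    ring
  rw [hfactor, norm_div, norm_mul, norm_pow, Complex.norm_real, Complex.norm_real, norm_mul,
    norm_norm, Real.norm_ofNat, Real.norm_eq_abs]
  field_simp

variable {E : Type*} [NormedAddCommGroup E] [NormedSpace ℂ E] {f : ℂ → E} {C : ℝ}

theorem norm_one_add_sq_div_sq_smul_le (hf : Differentiable ℂ f)
    (hbound : ∀ z, |z.re| * ‖f z‖ ≤ C * (1 + ‖z‖)) {r : ℝ} {w : ℂ} (hw : ‖w‖ < r) :
    ‖(1 + w ^ 2 / (r : ℂ) ^ 2) • f w‖ ≤ 2 * C * (1 + r⁻¹) := by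
  have hr : 0 < r := (norm_nonneg w).trans_lt hw
  refine Complex.norm_le_of_forall_mem_frontier_norm_le
    (f := fun z ↦ (1 + z ^ 2 / (r : ℂ) ^ 2) • f z) (U := Metric.ball 0 r)
    Metric.isBounded_ball (Differentiable.diffContOnCl (by fun_prop)) (fun z hz ↦ ?_)
    (subset_closure (by simpa using hw))
  rw [frontier_ball _ hr.ne', mem_sphere_zero_iff_norm] at hz
  subst hz
  calc ‖(1 + z ^ 2 / (‖z‖ : ℂ) ^ 2) • f z‖
      = 2 / ‖z‖ * (|z.re| * ‖f z‖) := by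
        rw [norm_smul, norm_one_add_sq_div_norm_sq (norm_pos_iff.mp hr)]
        ring
    _ ≤ 2 / ‖z‖ * (C * (1 + ‖z‖)) := mul_le_mul_of_nonneg_left (hbound z) (by positivity)
    _ = 2 * C * (1 + ‖z‖⁻¹) := by
        field_simp
        ring

theorem norm_le_of_abs_re_mul_norm_le (hf : Differentiable ℂ f)
    (hbound : ∀ z, |z.re| * ‖f z‖ ≤ C * (1 + ‖z‖)) (w : ℂ) : ‖f w‖ ≤ 2 * C := by
  have hinv : Tendsto (fun r : ℝ ↦ ((r : ℂ) ^ 2)⁻¹) atTop (𝓝 0) := by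
    simpa only [Function.comp_def, Complex.ofReal_inv, inv_pow, Complex.ofReal_zero, ne_eq,
      OfNat.ofNat_ne_zero, not_false_eq_true, zero_pow] using
      ((Complex.continuous_ofReal.tendsto 0).comp tendsto_inv_atTop_zero).pow 2
  have hleft : Tendsto (fun r : ℝ ↦ ‖(1 + w ^ 2 / (r : ℂ) ^ 2) • f w‖) atTop (𝓝 ‖f w‖) := by
    simpa [div_eq_mul_inv] using
      (((hinv.const_mul (w ^ 2)).const_add 1).smul_const (f w)).norm
  have hright : Tendsto (fun r : ℝ ↦ 2 * C * (1 + r⁻¹)) atTop (𝓝 (2 * C)) := by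
    simpa using (tendsto_inv_atTop_zero.const_add (1 : ℝ)).const_mul (2 * C)
  refine le_of_tendsto_of_tendsto hleft hright ?_
  filter_upwards [eventually_gt_atTop ‖w‖] with r hr
  exact norm_one_add_sq_div_sq_smul_le hf hbound hr

theorem apply_eq_apply_of_abs_re_mul_norm_le (hf : Differentiable ℂ f)
    (hbound : ∀ z, |z.re| * ‖f z‖ ≤ C * (1 + ‖z‖)) (z w : ℂ) : f z = f w :=
  hf.apply_eq_apply_of_bounded
    (isBounded_iff_forall_norm_le.mpr
      ⟨2 * C, Set.forall_mem_range.mpr (norm_le_of_abs_re_mul_norm_le hf hbound)⟩) z w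

end Liouville

section OrbitSeminorm

variable (𝕜 : Type*) {A : Type*} [NormedField 𝕜] [SeminormedRing A] [NormedAlgebra 𝕜 A]

/-- The seminorm `x ↦ sup_n ‖uⁿ x‖` over the integers `n`, for which multiplication by `u` is an
isometry. It is meaningful when the powers of `u` are bounded; an unbounded supremum of seminorms
is `0` by convention. -/
noncomputable def orbitSeminorm (u : Aˣ) : Seminorm 𝕜 A :=
  ⨆ n : ℤ, (normSeminorm 𝕜 A).comp (LinearMap.mulLeft 𝕜 ((u ^ n : Aˣ) : A))

variable {u : Aˣ} {C : ℝ}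

theorem norm_zpow_mul_le (hC : ∀ n : ℤ, ‖((u ^ n : Aˣ) : A)‖ ≤ C) (n : ℤ) (x : A) :
    ‖((u ^ n : Aˣ) : A) * x‖ ≤ C * ‖x‖ :=
  (norm_mul_le _ _).trans (by gcongr; exact hC n)

theorem bddAbove_range_norm_zpow_mul (hC : ∀ n : ℤ, ‖((u ^ n : Aˣ) : A)‖ ≤ C) (x : A) :
    BddAbove (Set.range fun n : ℤ ↦ ‖((u ^ n : Aˣ) : A) * x‖) :=
  ⟨C * ‖x‖, Set.forall_mem_range.mpr (norm_zpow_mul_le hC · x)⟩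

theorem orbitSeminorm_apply (hC : ∀ n : ℤ, ‖((u ^ n : Aˣ) : A)‖ ≤ C) (x : A) :
    orbitSeminorm 𝕜 u x = ⨆ n : ℤ, ‖((u ^ n : Aˣ) : A) * x‖ :=
  Seminorm.iSup_apply (Seminorm.bddAbove_range_iff.mpr (bddAbove_range_norm_zpow_mul hC))

theorem norm_le_orbitSeminorm (hC : ∀ n : ℤ, ‖((u ^ n : Aˣ) : A)‖ ≤ C) (x : A) :
    ‖x‖ ≤ orbitSeminorm 𝕜 u x := by
  rw [orbitSeminorm_apply 𝕜 hC]
  simpa using le_ciSup (bddAbove_range_norm_zpow_mul hC x) 0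

theorem orbitSeminorm_le (hC : ∀ n : ℤ, ‖((u ^ n : Aˣ) : A)‖ ≤ C) (x : A) :
    orbitSeminorm 𝕜 u x ≤ C * ‖x‖ := by
  rw [orbitSeminorm_apply 𝕜 hC]
  exact ciSup_le (norm_zpow_mul_le hC · x)

theorem orbitSeminorm_unit_mul (hC : ∀ n : ℤ, ‖((u ^ n : Aˣ) : A)‖ ≤ C) (x : A) :
    orbitSeminorm 𝕜 u (u * x) = orbitSeminorm 𝕜 u x := by
  simp only [orbitSeminorm_apply 𝕜 hC, ← mul_assoc, ← Units.val_mul, ← zpow_add_one]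
  exact (Equiv.addRight (1 : ℤ)).iSup_comp (g := fun n ↦ ‖((u ^ n : Aˣ) : A) * x‖)

variable {𝕜}

theorem abs_norm_sub_norm_mul_norm_le (hC : ∀ n : ℤ, ‖((u ^ n : Aˣ) : A)‖ ≤ C) (α β : 𝕜) (x : A) :
    |‖α‖ - ‖β‖| * ‖x‖ ≤ C * ‖(algebraMap 𝕜 A α - β • (u : A)) * x‖ := by
  set p := orbitSeminorm 𝕜 u
  have hα : p (α • x) = ‖α‖ * p x := map_smul_eq_mul p α x
  have hβ : p (β • (u * x)) = ‖β‖ * p x := by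
    rw [map_smul_eq_mul, orbitSeminorm_unit_mul 𝕜 hC]
  calc |‖α‖ - ‖β‖| * ‖x‖
      ≤ |‖α‖ - ‖β‖| * p x := by gcongr; exact norm_le_orbitSeminorm 𝕜 hC x
    _ = |p (α • x) - p (β • (u * x))| := by
        rw [hα, hβ, ← sub_mul, abs_mul, abs_of_nonneg (apply_nonneg p x)]
    _ ≤ p (α • x - β • (u * x)) := abs_sub_map_le_sub p _ _
    _ = p ((algebraMap 𝕜 A α - β • (u : A)) * x) := by
        rw [sub_mul, ← Algebra.smul_def, smul_mul_assoc]
    _ ≤ C * ‖(algebraMap 𝕜 A α - β • (u : A)) * x‖ := orbitSeminorm_le 𝕜 hC _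

end OrbitSeminorm

theorem isUnit_algebraMap_sub_smul_of_spectrum_subset {𝕜 A : Type*} [Field 𝕜] [Ring A]
    [Algebra 𝕜 A] {a : A} {μ α β : 𝕜} (ha : spectrum 𝕜 a ⊆ {μ}) (hαβ : α ≠ β * μ) :
    IsUnit (algebraMap 𝕜 A α - β • a) := by
  rcases eq_or_ne β 0 with rfl | hβ
  · simpa using (IsUnit.mk0 α (by simpa using hαβ)).map (algebraMap 𝕜 A)
  have hquot : β⁻¹ * α ∉ spectrum 𝕜 a := fun h ↦
    hαβ (by rw [← Set.mem_singleton_iff.mp (ha h), mul_inv_cancel_left₀ hβ])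
  have hscale : algebraMap 𝕜 A α - β • a =
      Units.mk0 β hβ • (algebraMap 𝕜 A (β⁻¹ * α) - a) := by
    rw [Units.smul_mk0, smul_sub, Algebra.smul_def β (algebraMap 𝕜 A _), ← map_mul,
      mul_inv_cancel_left₀ hβ]
  rw [hscale]
  exact (spectrum.notMem_iff.mp hquot).smul _

theorem two_mul_abs_re_le (z : ℂ) : 2 * |z.re| ≤ (1 + ‖z‖) * |‖z + 1‖ - ‖z - 1‖| := by
  have hsq : 4 * z.re = (‖z + 1‖ + ‖z - 1‖) * (‖z + 1‖ - ‖z - 1‖) := by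
    rw [← sq_sub_sq, Complex.sq_norm, Complex.sq_norm, Complex.normSq_add, Complex.normSq_sub]
    simp only [map_one, mul_one]
    ring
  have hsum : ‖z + 1‖ + ‖z - 1‖ ≤ 2 * (1 + ‖z‖) := by
    have hadd := norm_add_le z 1
    have hsub := norm_sub_le z 1
    rw [norm_one] at hadd hsub
    linarith
  have habs : 4 * |z.re| = (‖z + 1‖ + ‖z - 1‖) * |‖z + 1‖ - ‖z - 1‖| := by
    rw [← abs_of_nonneg (by positivity : 0 ≤ ‖z + 1‖ + ‖z - 1‖), ← abs_mul, ← hsq, abs_mul,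
      Nat.abs_ofNat]
  have := mul_le_mul_of_nonneg_right hsum (abs_nonneg (‖z + 1‖ - ‖z - 1‖))
  linarith

section CayleyResolvent

/-- The resolvent of `a` in the Cayley coordinate `z`, where the spectral parameter is
`(z + 1) / (z - 1)`. Clearing the denominator makes it meaningful at `z = 1`, the point
corresponding to spectral parameter `∞`. Where the inverse does not exist, the value is `0`. -/
noncomputable def cayleyResolvent {A : Type*} [Ring A] [Algebra ℂ A] (a : A) (z : ℂ) : A :=
  Ring.inverse (algebraMap ℂ A (z + 1) - (z - 1) • a)

theorem isUnit_cayley_of_spectrum_subset {A : Type*} [Ring A] [Algebra ℂ A] {a : A}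
    (ha : spectrum ℂ a ⊆ {1}) (z : ℂ) : IsUnit (algebraMap ℂ A (z + 1) - (z - 1) • a) :=
  isUnit_algebraMap_sub_smul_of_spectrum_subset ha fun h ↦ by
    have : (2 : ℂ) = 0 := by linear_combination h
    exact two_ne_zero this

theorem mul_cayleyResolvent {A : Type*} [Ring A] [Algebra ℂ A] {a : A}
    (ha : spectrum ℂ a ⊆ {1}) (z : ℂ) :
    (algebraMap ℂ A (z + 1) - (z - 1) • a) * cayleyResolvent a z = 1 :=
  Ring.mul_inverse_cancel _ (isUnit_cayley_of_spectrum_subset ha z)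

theorem eq_one_of_cayleyResolvent_one_eq_neg_one {A : Type*} [Ring A] [Algebra ℂ A] {a : A}
    (ha : spectrum ℂ a ⊆ {1}) (h : cayleyResolvent a 1 = cayleyResolvent a (-1)) : a = 1 := by
  have hone : (2 : ℂ) • cayleyResolvent a 1 = 1 := by
    simpa [Algebra.smul_def, one_add_one_eq_two] using mul_cayleyResolvent ha 1
  have hneg : (2 : ℂ) • a * cayleyResolvent a (-1) = 1 := by
    simpa [← neg_add', one_add_one_eq_two] using mul_cayleyResolvent ha (-1)
  calc a = a * (2 : ℂ) • cayleyResolvent a 1 := by rw [hone, mul_one]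
    _ = (2 : ℂ) • a * cayleyResolvent a (-1) := by rw [h, mul_smul_comm, smul_mul_assoc]
    _ = 1 := hneg

variable {A : Type*} [NormedRing A] [NormedAlgebra ℂ A]

theorem differentiable_cayleyResolvent [CompleteSpace A] {a : A} (ha : spectrum ℂ a ⊆ {1}) :
    Differentiable ℂ (cayleyResolvent a) := fun z ↦
  (differentiableAt_inverse (𝕜 := ℂ) (isUnit_cayley_of_spectrum_subset ha z)).comp z
    (f := fun z ↦ algebraMap ℂ A (z + 1) - (z - 1) • a)
    (by simp only [Algebra.algebraMap_eq_smul_one]; fun_prop)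

theorem abs_re_mul_norm_cayleyResolvent_le {u : Aˣ} {C : ℝ}
    (hC : ∀ n : ℤ, ‖((u ^ n : Aˣ) : A)‖ ≤ C) (hu : spectrum ℂ (u : A) ⊆ {1}) (z : ℂ) :
    |z.re| * ‖cayleyResolvent (u : A) z‖ ≤ C * ‖(1 : A)‖ / 2 * (1 + ‖z‖) := by
  have hresolvent := abs_norm_sub_norm_mul_norm_le hC (z + 1) (z - 1) (cayleyResolvent (u : A) z)
  rw [mul_cayleyResolvent hu] at hresolvent
  calc |z.re| * ‖cayleyResolvent (u : A) z‖
      = 2 * |z.re| * ‖cayleyResolvent (u : A) z‖ / 2 := by ring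
    _ ≤ (1 + ‖z‖) * |‖z + 1‖ - ‖z - 1‖| * ‖cayleyResolvent (u : A) z‖ / 2 := by
        gcongr ?_ * _ / 2; exact two_mul_abs_re_le z
    _ = (1 + ‖z‖) * (|‖z + 1‖ - ‖z - 1‖| * ‖cayleyResolvent (u : A) z‖) / 2 := by ring
    _ ≤ (1 + ‖z‖) * (C * ‖(1 : A)‖) / 2 := by gcongr
    _ = C * ‖(1 : A)‖ / 2 * (1 + ‖z‖) := by ring

end CayleyResolvent

theorem gelfand_doubly_power_bounded_general
    {A : Type*} [NormedRing A] [NormedAlgebra ℂ A] [CompleteSpace A] (u : Aˣ)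
    (hpb : ∃ C : ℝ, ∀ n : ℤ, ‖((u ^ n : Aˣ) : A)‖ ≤ C)
    (hspec : spectrum ℂ (u : A) ⊆ {1}) :
    (u : A) = 1 := by
  obtain ⟨C, hC⟩ := hpb
  have hconst : cayleyResolvent (u : A) 1 = cayleyResolvent (u : A) (-1) :=
    apply_eq_apply_of_abs_re_mul_norm_le (differentiable_cayleyResolvent hspec)
      (abs_re_mul_norm_cayleyResolvent_le hC hspec) 1 (-1)
  exact eq_one_of_cayleyResolvent_one_eq_neg_one hspec hconst

/-- Gelfand. Let `T` be an invertible bounded complex-linear operator on a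
complex Banach space which is doubly power-bounded, i.e. `sup_{n ∈ ℤ} ‖Tⁿ‖ < ∞`. If the
spectrum of `T` equals `{1}`, then `T` is the identity operator. -/
theorem gelfand_doubly_power_bounded
    {X : Type*} [NormedAddCommGroup X] [NormedSpace ℂ X] [CompleteSpace X]
    (T : (X →L[ℂ] X)ˣ)
    (hpb : ∃ C : ℝ, ∀ n : ℤ, ‖((T ^ n : (X →L[ℂ] X)ˣ) : X →L[ℂ] X)‖ ≤ C)
    (hspec : spectrum ℂ (T : X →L[ℂ] X) = {1}) :
    (T : X →L[ℂ] X) = 1 :=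
  gelfand_doubly_power_bounded_general T hpb hspec.subset
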